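/- Let n ≥ 1, let V : ℝⁿ → ℝ and W : ℝ × ℝⁿ → ℝ be smooth with V, W and all their derivatives bounded, and let ψ : ℝ × ℝⁿ → ℂ be smooth such that for each t the functions ψ(t,·) and ∂ₜψ(t,·) are Schwartz, with Schwartz seminorms locally bounded in t, and ψ satisfies i∂ₜψ(t,x) = −Δψ(t,x) + V(x)ψ(t,x) + W(t,x)ψ(t,x) on ℝ × ℝⁿ. Then the function t ↦ ‖(x−2pt)ψ(t)‖² + 4t² ∫_{ℝⁿ}(V(x)+W(t,x))|ψ(t,x)|² dx is differentiable on ℝ with derivative equal to 4t ∫_{ℝⁿ} ( x·∇V(x) + x·∇ₓW(t,x) + 2V(x) + 2W(t,x) ) |ψ(t,x)|² dx + 4t² ∫_{ℝⁿ} ∂ₜW(t,x) |ψ(t,x)|² dx. -/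

import Mathlib

open MeasureTheory Complex

noncomputable section

/-- Partial derivative in the `i`-th coordinate direction. -/
def pd {n : ℕ} (f : EuclideanSpace ℝ (Fin n) → ℂ) (i : Fin n)
    (x : EuclideanSpace ℝ (Fin n)) : ℂ :=
  fderiv ℝ f x (EuclideanSpace.single i 1)

/-- The Laplacian `Δf = ∑ i ∂²f/∂xᵢ²`. -/
def lap {n : ℕ} (f : EuclideanSpace ℝ (Fin n) → ℂ)
    (x : EuclideanSpace ℝ (Fin n)) : ℂ :=
  ∑ i, pd (fun y => pd f i y) i x

/-- Squared norm of the gradient, `‖∇f(x)‖²_{ℂⁿ} = ∑ i ‖∂ᵢf(x)‖²`. -/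
def gradNormSq {n : ℕ} (f : EuclideanSpace ℝ (Fin n) → ℂ)
    (x : EuclideanSpace ℝ (Fin n)) : ℝ :=
  ∑ i, ‖pd f i x‖ ^ 2

/-- `x·∇V(x) = ∑ i xᵢ ∂V/∂xᵢ(x)` for a real-valued potential `V`. -/
def xdotGrad {n : ℕ} (V : EuclideanSpace ℝ (Fin n) → ℝ)
    (x : EuclideanSpace ℝ (Fin n)) : ℝ :=
  ∑ i, x i * fderiv ℝ V x (EuclideanSpace.single i 1)

/-- Time derivative `∂ₜψ(t,x)`. -/
def tderiv {n : ℕ} (ψ : ℝ → EuclideanSpace ℝ (Fin n) → ℂ) (t : ℝ)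
    (x : EuclideanSpace ℝ (Fin n)) : ℂ :=
  deriv (fun s => ψ s x) t

/-- `ψ(t,·)` is Schwartz for each `t`, with Schwartz seminorms locally bounded
in `t`: on each compact time interval all weighted derivative bounds are uniform. -/
def LocUnifSchwartz {n : ℕ} (ψ : ℝ → EuclideanSpace ℝ (Fin n) → ℂ) : Prop :=
  ∀ (k m : ℕ) (T : ℝ), ∃ C : ℝ, ∀ t ∈ Set.Icc (-T) T,
    ∀ x : EuclideanSpace ℝ (Fin n),
      ‖x‖ ^ k * ‖iteratedFDeriv ℝ m (ψ t) x‖ ≤ C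

/-- The conformal factor `‖(x−2pt)ψ(t)‖² = ∫_{ℝⁿ} ‖xψ(t,x) + 2it∇ₓψ(t,x)‖²_{ℂⁿ} dx`. -/
def conformalFactor {n : ℕ} (ψ : ℝ → EuclideanSpace ℝ (Fin n) → ℂ) (t : ℝ) : ℝ :=
  ∫ x : EuclideanSpace ℝ (Fin n),
    ∑ i, ‖(x i : ℂ) * ψ t x + 2 * Complex.I * (t : ℂ) * pd (ψ t) i x‖ ^ 2

section Helpers

variable {n : ℕ} {F : Type*} [NormedAddCommGroup F] [InnerProductSpace ℝ F]

local notation "E" n => EuclideanSpace ℝ (Fin n)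

/-- continuous in space, rapidly decaying locally uniformly in time -/
def Nice (h : ℝ → (E n) → F) : Prop :=
  (∀ t, Continuous (h t)) ∧ ∀ (k : ℕ) (T : ℝ), ∃ C : ℝ, ∀ t ∈ Set.Icc (-T) T,
    ∀ x, (1 + ‖x‖) ^ k * ‖h t x‖ ≤ C

/-- continuous in space, polynomially bounded locally uniformly in time -/
def Mult (b : ℝ → (E n) → ℝ) : Prop :=
  (∀ t, Continuous (b t)) ∧ ∃ k : ℕ, ∀ (T : ℝ), ∃ C : ℝ, ∀ t ∈ Set.Icc (-T) T,
    ∀ x, ‖b t x‖ ≤ C * (1 + ‖x‖) ^ k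

theorem Nice.add {f g : ℝ → (E n) → F} (hf : Nice f) (hg : Nice g) :
    Nice (fun t x => f t x + g t x) := by
  refine ⟨fun t => (hf.1 t).add (hg.1 t), fun k T => ?_⟩
  obtain ⟨C, hC⟩ := hf.2 k T
  obtain ⟨D, hD⟩ := hg.2 k T
  refine ⟨C + D, fun t ht x => ?_⟩
  have h1 := hC t ht x
  have h2 := hD t ht x
  have h3 : (1 + ‖x‖) ^ k * ‖f t x + g t x‖ ≤ (1 + ‖x‖) ^ k * (‖f t x‖ + ‖g t x‖) := by
    gcongr; exact norm_add_le _ _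
  linarith

theorem Nice.zero : Nice (fun _ _ => 0 : ℝ → (E n) → F) :=
  ⟨fun _ => continuous_const, fun _ _ => ⟨0, fun _ _ _ => by simp⟩⟩

theorem Nice.sum {ι : Type*} (s : Finset ι) {f : ι → ℝ → (E n) → F} (hf : ∀ i, Nice (f i)) :
    Nice (fun t x => ∑ i ∈ s, f i t x) := by
  classical
  induction s using Finset.induction_on with
  | empty => simpa using Nice.zero
  | insert a s ha ih =>
    simp only [Finset.sum_insert ha]
    exact (hf a).add ih

theorem Mult.mul {b c : ℝ → (E n) → ℝ} (hb : Mult b) (hc : Mult c) :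
    Mult (fun t x => b t x * c t x) := by
  refine ⟨fun t => (hb.1 t).mul (hc.1 t), ?_⟩
  obtain ⟨k, hk⟩ := hb.2
  obtain ⟨l, hl⟩ := hc.2
  refine ⟨k + l, fun T => ?_⟩
  obtain ⟨C, hC⟩ := hk T
  obtain ⟨D, hD⟩ := hl T
  refine ⟨C * D, fun t ht x => ?_⟩
  have h1 := hC t ht x
  have h2 := hD t ht x
  rw [norm_mul, pow_add]
  calc _ ≤ (C * (1 + ‖x‖) ^ k) * (D * (1 + ‖x‖) ^ l) :=
        mul_le_mul h1 h2 (norm_nonneg _) ((norm_nonneg _).trans h1)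
    _ = _ := by ring

theorem Mult.smul {b : ℝ → (E n) → ℝ} {f : ℝ → (E n) → F} (hb : Mult b) (hf : Nice f) :
    Nice (fun t x => b t x • f t x) := by
  refine ⟨fun t => (hb.1 t).smul (hf.1 t), fun k T => ?_⟩
  obtain ⟨l, hl⟩ := hb.2
  obtain ⟨C, hC⟩ := hl T
  obtain ⟨D, hD⟩ := hf.2 (k + l) T
  refine ⟨|C| * D, fun t ht x => ?_⟩
  have h1 := hC t ht x
  have h2 := hD t ht x
  rw [norm_smul]
  have h4 : C ≤ |C| := le_abs_self C
  calc (1 + ‖x‖) ^ k * (‖b t x‖ * ‖f t x‖)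
      ≤ (1 + ‖x‖) ^ k * ((|C| * (1 + ‖x‖) ^ l) * ‖f t x‖) := by
        gcongr
        refine h1.trans ?_
        gcongr
    _ = |C| * ((1 + ‖x‖) ^ (k + l) * ‖f t x‖) := by ring
    _ ≤ _ := by gcongr

theorem Mult.mulN {b : ℝ → (E n) → ℝ} {f : ℝ → (E n) → ℝ} (hb : Mult b) (hf : Nice f) :
    Nice (fun t x => b t x * f t x) := hb.smul hf

theorem Mult.time {φ : ℝ → ℝ} (hφ : Continuous φ) : Mult (fun t (_ : E n) => φ t) := by
  refine ⟨fun t => continuous_const, 0, fun T => ?_⟩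
  obtain ⟨C, hC⟩ := (isCompact_Icc (a := -T) (b := T)).exists_bound_of_continuousOn
    hφ.continuousOn
  exact ⟨C, fun t ht x => by simpa using hC t ht⟩

theorem Mult.coord (i : Fin n) : Mult (fun _ (x : E n) => x i) := by
  refine ⟨fun t => by fun_prop, 1, fun T => ⟨1, fun t ht x => ?_⟩⟩
  have := PiLp.norm_apply_le x i
  linarith

theorem Mult.bdd {b : ℝ → (E n) → ℝ} (h : ∀ t, Continuous (b t)) {C : ℝ}
    (hC : ∀ t x, ‖b t x‖ ≤ C) : Mult b :=
  ⟨h, 0, fun T => ⟨C, fun t _ x => by simpa using hC t x⟩⟩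

theorem Nice.inner {f g : ℝ → (E n) → F} (hf : Nice f) (hg : Nice g) :
    Nice (fun t x => inner ℝ (f t x) (g t x)) := by
  refine ⟨fun t => (hf.1 t).inner (hg.1 t), fun k T => ?_⟩
  obtain ⟨C, hC⟩ := hf.2 k T
  obtain ⟨D, hD⟩ := hg.2 0 T
  refine ⟨C * D, fun t ht x => ?_⟩
  have h1 := hC t ht x
  have h2 := hD t ht x
  simp only [pow_zero, one_mul] at h2
  calc _ ≤ (1 + ‖x‖) ^ k * (‖f t x‖ * ‖g t x‖) := by
        gcongr; exact norm_inner_le_norm _ _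
    _ = ((1 + ‖x‖) ^ k * ‖f t x‖) * ‖g t x‖ := by ring
    _ ≤ C * D := mul_le_mul h1 h2 (norm_nonneg _) (le_trans (by positivity) h1)

theorem Nice.Imul {f : ℝ → (E n) → ℂ} (hf : Nice f) : Nice (fun t x => I * f t x) :=
  ⟨fun t => continuous_const.mul (hf.1 t), fun k T => by simpa using hf.2 k T⟩

theorem Nice.bound {f : ℝ → (E n) → F} (hf : Nice f) (T : ℝ) :
    ∃ B : (E n) → ℝ, Integrable B ∧ ∀ t ∈ Set.Icc (-T) T, ∀ x, ‖f t x‖ ≤ B x := by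
  obtain ⟨C, hC⟩ := hf.2 (n + 1) T
  refine ⟨fun x => C * (1 + ‖x‖) ^ (-((n + 1 : ℕ) : ℝ)), ?_, fun t ht x => ?_⟩
  · apply Integrable.const_mul
    apply integrable_one_add_norm
    simp
  · beta_reduce
    rw [Real.rpow_neg (by positivity), Real.rpow_natCast, ← div_eq_mul_inv,
      le_div_iff₀ (by positivity), mul_comm]
    exact hC t ht x

theorem Nice.integrable {f : ℝ → (E n) → F} (hf : Nice f) (t : ℝ) : Integrable (f t) := by
  obtain ⟨B, hB, h⟩ := hf.bound |t|
  refine hB.mono' (hf.1 t).aestronglyMeasurable (Filter.Eventually.of_forall fun x => ?_)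
  exact h t ⟨neg_abs_le t, le_abs_self t⟩ x

theorem Nice.hasDerivAt {f f' : ℝ → (E n) → ℝ} (hf : Nice f) (hf' : Nice f')
    (h : ∀ t x, HasDerivAt (fun s => f s x) (f' t x) t) (t : ℝ) :
    HasDerivAt (fun s => ∫ x, f s x) (∫ x, f' t x) t := by
  obtain ⟨B, hB, hb⟩ := hf'.bound (|t| + 1)
  have hs : Set.Icc (-(|t| + 1)) (|t| + 1) ∈ nhds t :=
    Icc_mem_nhds (by linarith [neg_abs_le t]) (by linarith [le_abs_self t])
  exact (hasDerivAt_integral_of_dominated_loc_of_deriv_le hs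
    (Filter.Eventually.of_forall fun s => (hf.1 s).aestronglyMeasurable) (hf.integrable t)
    (hf'.1 t).aestronglyMeasurable
    (Filter.Eventually.of_forall fun x s hs => hb s hs x) hB
    (Filter.Eventually.of_forall fun x s hs => h s x)).2

/-- nice function with nice `j`-th partial derivative -/
def FN (j : Fin n) (h h' : ℝ → (E n) → F) : Prop :=
  Nice h ∧ Nice h' ∧
    ∀ t x, HasLineDerivAt ℝ (h t) (h' t x) x (EuclideanSpace.single j (1 : ℝ))

/-- multiplier with multiplier `j`-th partial derivative -/
def FM (j : Fin n) (b b' : ℝ → (E n) → ℝ) : Prop :=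
  Mult b ∧ Mult b' ∧
    ∀ t x, HasLineDerivAt ℝ (b t) (b' t x) x (EuclideanSpace.single j (1 : ℝ))

theorem FN.inner {j : Fin n} {f f' g g' : ℝ → (E n) → F} (hf : FN j f f') (hg : FN j g g') :
    FN j (fun t x => inner ℝ (f t x) (g t x))
      (fun t x => inner ℝ (f t x) (g' t x) + inner ℝ (f' t x) (g t x)) := by
  refine ⟨hf.1.inner hg.1, (hf.1.inner hg.2.1).add (hf.2.1.inner hg.1), fun t x => ?_⟩
  have := HasDerivAt.inner ℝ (hf.2.2 t x) (hg.2.2 t x)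
  simpa [HasLineDerivAt] using this

theorem FM.mul {j : Fin n} {f f' g g' : ℝ → (E n) → ℝ} (hf : FM j f f') (hg : FN j g g') :
    FN j (fun t x => f t x * g t x)
      (fun t x => f' t x * g t x + f t x * g' t x) := by
  refine ⟨hf.1.mulN hg.1, (hf.2.1.mulN hg.1).add (hf.1.mulN hg.2.1), fun t x => ?_⟩
  have := HasDerivAt.fun_mul (hf.2.2 t x) (hg.2.2 t x)
  simpa [HasLineDerivAt] using this

theorem FN.Imul {j : Fin n} {f f' : ℝ → (E n) → ℂ} (hf : FN j f f') :
    FN j (fun t x => I * f t x) (fun t x => I * f' t x) :=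
  ⟨hf.1.Imul, hf.2.1.Imul, fun t x => HasDerivAt.const_mul I (hf.2.2 t x)⟩

theorem FM.coord (i j : Fin n) :
    FM j (fun _ (x : E n) => x i) (fun _ _ => if i = j then 1 else 0) := by
  refine ⟨Mult.coord i, Mult.time continuous_const, fun t x => ?_⟩
  have h : HasDerivAt (fun s : ℝ => x i + s * (if i = j then 1 else 0)) (0 + 1 * (if i = j then 1 else 0)) 0 :=
    (hasDerivAt_const _ _).add ((hasDerivAt_id (0:ℝ)).mul_const _)
  simpa [HasLineDerivAt, Pi.single_apply] using h

theorem FN.integral_eq {j : Fin n} {h h' : ℝ → (E n) → ℝ} (hh : FN j h h') (t : ℝ) :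
    ∫ x, h' t x = 0 := by
  have := integral_bilinear_hasLineDerivAt_right_eq_neg_left_of_integrable
    (μ := (volume : Measure (E n)))
    (f := fun _ => (1:ℝ)) (f' := fun _ => 0) (g := h t) (g' := h' t)
    (v := EuclideanSpace.single j (1 : ℝ)) (B := ContinuousLinearMap.mul ℝ ℝ)
    (by simp) (by simpa using hh.2.1.integrable t) (by simpa using hh.1.integrable t)
    (fun x _ => by simpa [HasLineDerivAt] using hasDerivAt_const (0:ℝ) (1:ℝ))
    (fun x _ => hh.2.2 t x)
  simpa using this


theorem one_add_pow_mul_le {k : ℕ} {r a C D : ℝ} (hr : 0 ≤ r) (h0 : r ^ 0 * a ≤ C)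
    (hk : r ^ k * a ≤ D) (ha : 0 ≤ a) : (1 + r) ^ k * a ≤ 2 ^ (k - 1) * (C + D) := by
  have := add_pow_le (zero_le_one' ℝ) hr k
  calc (1 + r) ^ k * a ≤ (2 ^ (k - 1) * (1 ^ k + r ^ k)) * a := by gcongr
    _ = 2 ^ (k - 1) * (r ^ 0 * a + r ^ k * a) := by simp; ring
    _ ≤ _ := by gcongr

theorem LocUnifSchwartz.nice {ψ : ℝ → (E n) → ℂ} (hS : LocUnifSchwartz ψ) (m : ℕ)
    {h : ℝ → (E n) → ℂ} (hc : ∀ t, Continuous (h t))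
    (hb : ∀ t x, ‖h t x‖ ≤ ‖iteratedFDeriv ℝ m (ψ t) x‖) : Nice h := by
  refine ⟨hc, fun k T => ?_⟩
  obtain ⟨C, hC⟩ := hS 0 m T
  obtain ⟨D, hD⟩ := hS k m T
  refine ⟨2 ^ (k - 1) * (C + D), fun t ht x => ?_⟩
  refine le_trans ?_ (one_add_pow_mul_le (norm_nonneg x) (hC t ht x) (hD t ht x) (norm_nonneg _))
  gcongr
  exact hb t x

theorem norm_single_one (i : Fin n) : ‖(EuclideanSpace.single i (1:ℝ) : E n)‖ = 1 := by simp

theorem norm_fderiv_single_le {G : Type*} [NormedAddCommGroup G] [NormedSpace ℝ G]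
    (L : (E n) →L[ℝ] G) (i : Fin n) : ‖L (EuclideanSpace.single i 1)‖ ≤ ‖L‖ := by
  simpa using L.le_opNorm (EuclideanSpace.single i (1:ℝ))

theorem pd_pd {f : (E n) → ℂ} (hf : ContDiff ℝ (⊤ : ℕ∞) f) (i j : Fin n) (x : E n) :
    pd (fun y => pd f i y) j x = fderiv ℝ (fderiv ℝ f) x (EuclideanSpace.single j 1)
      (EuclideanSpace.single i 1) := by
  have h1 : DifferentiableAt ℝ (fderiv ℝ f) x :=
    (hf.fderiv_right (m := (⊤ : ℕ∞)) (by simp)).differentiable (by simp) x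
  have h2 := h1.hasFDerivAt.clm_apply (hasFDerivAt_const (EuclideanSpace.single i (1:ℝ)) x)
  unfold pd
  rw [h2.fderiv]
  simp

theorem pd_symm {f : (E n) → ℂ} (hf : ContDiff ℝ (⊤ : ℕ∞) f) (i j : Fin n) (x : E n) :
    pd (fun y => pd f i y) j x = pd (fun y => pd f j y) i x := by
  rw [pd_pd hf, pd_pd hf]
  exact (hf.contDiffAt.isSymmSndFDerivAt (by simp; exact WithTop.coe_le_coe.2 (le_top : (2 : ℕ∞) ≤ ⊤))).eq _ _

theorem pd_contDiff {f : (E n) → ℂ} (hf : ContDiff ℝ (⊤ : ℕ∞) f) (i : Fin n) :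
    ContDiff ℝ (⊤ : ℕ∞) (fun y => pd f i y) := by
  unfold pd
  exact (hf.fderiv_right (m := (⊤ : ℕ∞)) (by simp)).clm_apply contDiff_const

theorem pd_line {f : (E n) → ℂ} (hf : ContDiff ℝ (⊤ : ℕ∞) f) (j : Fin n) (x : E n) :
    HasLineDerivAt ℝ f (pd f j x) x (EuclideanSpace.single j (1 : ℝ)) :=
  ((hf.differentiable (by simp)) x).hasFDerivAt.hasLineDerivAt _

theorem norm_pd_le (f : (E n) → ℂ) (i : Fin n) (x : E n) :
    ‖pd f i x‖ ≤ ‖iteratedFDeriv ℝ 1 f x‖ := by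
  rw [norm_iteratedFDeriv_one]
  exact norm_fderiv_single_le _ i

theorem norm_pd_pd_le {f : (E n) → ℂ} (hf : ContDiff ℝ (⊤ : ℕ∞) f) (i j : Fin n) (x : E n) :
    ‖pd (fun y => pd f i y) j x‖ ≤ ‖iteratedFDeriv ℝ 2 f x‖ := by
  rw [pd_pd hf, ← norm_iteratedFDeriv_fderiv, norm_iteratedFDeriv_one]
  exact (norm_fderiv_single_le _ i).trans (norm_fderiv_single_le _ j)

theorem slice_hasFDerivAt {G : Type*} [NormedAddCommGroup G] [NormedSpace ℝ G]
    {Ψ : ℝ × (E n) → G} (h : Differentiable ℝ Ψ) (t : ℝ) (x : E n) :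
    HasFDerivAt (fun y => Ψ (t, y)) ((fderiv ℝ Ψ (t, x)).comp (ContinuousLinearMap.inr ℝ ℝ (E n))) x :=
  (h (t, x)).hasFDerivAt.comp x (hasFDerivAt_prodMk_right t x)

theorem slice_hasDerivAt {G : Type*} [NormedAddCommGroup G] [NormedSpace ℝ G]
    {Ψ : ℝ × (E n) → G} (h : Differentiable ℝ Ψ) (t : ℝ) (x : E n) :
    HasDerivAt (fun s => Ψ (s, x)) (fderiv ℝ Ψ (t, x) (1, 0)) t := by
  have := ((h (t, x)).hasFDerivAt.comp t (hasFDerivAt_prodMk_left t x)).hasDerivAt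
  simpa [Function.comp_def] using this

theorem tderiv_eq {ψ : ℝ → (E n) → ℂ}
    (hψ : ContDiff ℝ (⊤ : ℕ∞) (fun p : ℝ × (E n) => ψ p.1 p.2)) (t : ℝ) (x : E n) :
    tderiv ψ t x = fderiv ℝ (fun p : ℝ × (E n) => ψ p.1 p.2) (t, x) (1, 0) :=
  (slice_hasDerivAt (hψ.differentiable (by simp)) t x).deriv

theorem tderiv_has {ψ : ℝ → (E n) → ℂ}
    (hψ : ContDiff ℝ (⊤ : ℕ∞) (fun p : ℝ × (E n) => ψ p.1 p.2)) (t : ℝ) (x : E n) :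
    HasDerivAt (fun s => ψ s x) (tderiv ψ t x) t := by
  rw [tderiv_eq hψ]
  exact slice_hasDerivAt (hψ.differentiable (by simp)) t x

theorem tderiv_contDiff {ψ : ℝ → (E n) → ℂ}
    (hψ : ContDiff ℝ (⊤ : ℕ∞) (fun p : ℝ × (E n) => ψ p.1 p.2)) (t : ℝ) :
    ContDiff ℝ (⊤ : ℕ∞) (tderiv ψ t) := by
  have : tderiv ψ t = fun x => fderiv ℝ (fun p : ℝ × (E n) => ψ p.1 p.2) (t, x) (1, 0) :=
    funext (tderiv_eq hψ t)
  rw [this]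
  exact ((hψ.fderiv_right (m := (⊤ : ℕ∞)) (by simp)).comp (contDiff_prodMk_right t)).clm_apply
    contDiff_const

theorem pd_time {ψ : ℝ → (E n) → ℂ}
    (hψ : ContDiff ℝ (⊤ : ℕ∞) (fun p : ℝ × (E n) => ψ p.1 p.2)) (i : Fin n) (t : ℝ) (x : E n) :
    HasDerivAt (fun s => pd (ψ s) i x) (pd (tderiv ψ t) i x) t := by
  set Ψ := fun p : ℝ × (E n) => ψ p.1 p.2 with hΨ
  have hd : Differentiable ℝ Ψ := hψ.differentiable (by simp)
  have hd2 : Differentiable ℝ (fderiv ℝ Ψ) :=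
    (hψ.fderiv_right (m := (⊤ : ℕ∞)) (by simp)).differentiable (by simp)
  have e1 : (fun s => pd (ψ s) i x) =
      fun s => fderiv ℝ Ψ (s, x) (0, EuclideanSpace.single i 1) := by
    funext s
    unfold pd
    have := (slice_hasFDerivAt hd s x).fderiv
    simp only [hΨ] at this
    rw [this]
    simp [hΨ]
  have e2 : pd (tderiv ψ t) i x =
      fderiv ℝ (fderiv ℝ Ψ) (t, x) (0, EuclideanSpace.single i 1) (1, 0) := by
    have : tderiv ψ t = fun x => fderiv ℝ Ψ (t, x) (1, 0) := funext (tderiv_eq hψ t)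
    unfold pd
    rw [this]
    have h2 := (slice_hasFDerivAt hd2 t x).clm_apply (hasFDerivAt_const ((1:ℝ), (0 : E n)) x)
    rw [h2.fderiv]
    simp
  rw [e1, e2, (hψ.contDiffAt.isSymmSndFDerivAt (by simp; exact WithTop.coe_le_coe.2 (le_top : (2 : ℕ∞) ≤ ⊤))).eq]
  have h3 := (slice_hasDerivAt hd2 t x).clm_apply
    (hasDerivAt_const t ((0:ℝ), (EuclideanSpace.single i 1 : E n)))
  simpa using h3

theorem key_algebra (f g : ℂ) (f1 g1 : Fin n → ℂ) (f2 : Fin n → Fin n → ℂ)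
    (hsymm : ∀ i j, f2 i j = f2 j i) (x U1 : Fin n → ℝ) (U Ut t : ℝ)
    (heq : I * g = -(∑ i, f2 i i) + (U : ℂ) * f) :
    (∑ i, 2 * inner ℝ (x i • f + (2 * t) • (I * f1 i))
        (x i • g + ((2 * t) • (I * g1 i) + (2 : ℝ) • (I * f1 i))))
      + ((8 * t) * (U * inner ℝ f f) + (4 * t ^ 2) * (Ut * inner ℝ f f
          + U * (2 * inner ℝ f g)))
    = 4 * t * (((∑ i, x i * U1 i) + 2 * U) * inner ℝ f f)
      + 4 * t ^ 2 * (Ut * inner ℝ f f)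
      + ∑ i, ∑ j, (
          (-2) * ((if i = j then 1 else 0) * (x i * inner ℝ (I * f) (f1 j))
            + x i * ((if i = j then 1 else 0) * inner ℝ (I * f) (f1 j)
              + x i * (inner ℝ (I * f) (f2 j j) + inner ℝ (I * f1 j) (f1 j))))
          + (8 * t) * ((if i = j then 1 else 0) * inner ℝ (f1 i) (f1 j)
              + x i * (inner ℝ (f1 i) (f2 j j) + inner ℝ (f2 i j) (f1 j)))
          + (-4 * t) * ((if j = j then 1 else 0) * inner ℝ (f1 i) (f1 i)
              + x j * (inner ℝ (f1 i) (f2 i j) + inner ℝ (f2 i j) (f1 i)))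
          + (4 * t) * (inner ℝ f (f2 j j) + inner ℝ (f1 j) (f1 j)))
      + ∑ j, (
          (4 * t) * ((if j = j then 1 else 0) * inner ℝ f (I * g)
              + x j * (inner ℝ f (I * g1 j) + inner ℝ (f1 j) (I * g)))
          + (-4 * t) * ((if j = j then 1 else 0) * (U * inner ℝ f f)
              + x j * (U1 j * inner ℝ f f + U * (inner ℝ f (f1 j) + inner ℝ (f1 j) f)))
          + (8 * t ^ 2) * (inner ℝ (f1 j) (g1 j) + inner ℝ (f2 j j) g)) := by
  set L : ℂ := ∑ i, f2 i i with hL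
  have hg : I * g = -L + (U : ℂ) * f := heq
  have hpair : (∑ i, ∑ j, (
          (-2) * ((if i = j then 1 else 0) * (x i * inner ℝ (I * f) (f1 j))
            + x i * ((if i = j then 1 else 0) * inner ℝ (I * f) (f1 j)
              + x i * (inner ℝ (I * f) (f2 j j) + inner ℝ (I * f1 j) (f1 j))))
          + (8 * t) * ((if i = j then 1 else 0) * inner ℝ (f1 i) (f1 j)
              + x i * (inner ℝ (f1 i) (f2 j j) + inner ℝ (f2 i j) (f1 j)))
          + (-4 * t) * ((if j = j then 1 else 0) * inner ℝ (f1 i) (f1 i)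
              + x j * (inner ℝ (f1 i) (f2 i j) + inner ℝ (f2 i j) (f1 i)))
          + (4 * t) * (inner ℝ f (f2 j j) + inner ℝ (f1 j) (f1 j))))
      = ∑ i, (-4 * (x i * inner ℝ (I * f) (f1 i)) - 2 * x i ^ 2 * inner ℝ (I * f) L
          + 8 * t * inner ℝ (f1 i) (f1 i) + 8 * t * x i * inner ℝ (f1 i) L
          + 4 * t * inner ℝ f L) := by
    have hc : (∑ i, ∑ j, (8 * t * x i * inner ℝ (f2 i j) (f1 j)
        - 8 * t * x j * inner ℝ (f2 j i) (f1 i))) = (0 : ℝ) := by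
      simp only [Finset.sum_sub_distrib]
      rw [Finset.sum_comm (f := fun i j => 8 * t * x j * inner ℝ (f2 j i) (f1 i))]
      simp
    have hd : (∑ i : Fin n, ∑ j : Fin n, (4 * t * inner ℝ (f1 j) (f1 j)
        - 4 * t * inner ℝ (f1 i) (f1 i))) = (0 : ℝ) := by
      simp only [Finset.sum_sub_distrib]
      rw [Finset.sum_comm (f := fun i j => 4 * t * inner ℝ (f1 j) (f1 j))]
      simp
    have hI : ∀ j, inner ℝ (I * f1 j) (f1 j) = (0 : ℝ) := fun j => by
      simp [Complex.inner]; ring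
    have h0 : ∀ A B S1 S2 : ℝ, S1 = 0 → S2 = 0 → A - S1 - S2 = B → A = B := by
      intros; linarith
    refine h0 _ _ _ _ hc hd ?_
    rw [← Finset.sum_sub_distrib, ← Finset.sum_sub_distrib]
    refine Finset.sum_congr rfl fun i _ => ?_
    rw [← Finset.sum_sub_distrib, ← Finset.sum_sub_distrib]
    have h1 : ∀ z : ℂ, inner ℝ z L = ∑ j, inner ℝ z (f2 j j) := fun z => by
      rw [hL, inner_sum]
    have h2 : (∑ j, (if i = j then (-4 * (x i * inner ℝ (I * f) (f1 j))
        + 8 * t * inner ℝ (f1 i) (f1 j)) else 0)) = -4 * (x i * inner ℝ (I * f) (f1 i))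
        + 8 * t * inner ℝ (f1 i) (f1 i) := by
      simp only [Finset.sum_ite_eq, Finset.mem_univ, if_true]
    rw [h1, h1, h1]
    have h3 : -4 * (x i * inner ℝ (I * f) (f1 i)) - 2 * x i ^ 2 * ∑ j, inner ℝ (I * f) (f2 j j)
          + 8 * t * inner ℝ (f1 i) (f1 i) + 8 * t * x i * ∑ j, inner ℝ (f1 i) (f2 j j)
          + 4 * t * ∑ j, inner ℝ f (f2 j j) =
        ∑ j, ((if i = j then (-4 * (x i * inner ℝ (I * f) (f1 j))
        + 8 * t * inner ℝ (f1 i) (f1 j)) else 0) + ((- 2 * x i ^ 2) * inner ℝ (I * f) (f2 j j)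
          + 8 * t * x i * inner ℝ (f1 i) (f2 j j)
          + 4 * t * inner ℝ f (f2 j j))) := by
      rw [Finset.sum_add_distrib, h2, Finset.sum_add_distrib, Finset.sum_add_distrib,
        Finset.mul_sum, Finset.mul_sum, Finset.mul_sum]
      simp only [neg_mul, Finset.sum_neg_distrib]
      ring
    rw [h3]
    refine Finset.sum_congr rfl fun j _ => ?_
    rw [hI, hsymm j i, real_inner_comm (f2 i j) (f1 i)]
    simp only [if_true]
    split_ifs <;> ring
  have hsingle : (∑ j, (
          (4 * t) * ((if j = j then 1 else 0) * inner ℝ f (I * g)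
              + x j * (inner ℝ f (I * g1 j) + inner ℝ (f1 j) (I * g)))
          + (-4 * t) * ((if j = j then 1 else 0) * (U * inner ℝ f f)
              + x j * (U1 j * inner ℝ f f + U * (inner ℝ f (f1 j) + inner ℝ (f1 j) f)))
          + (8 * t ^ 2) * (inner ℝ (f1 j) (g1 j) + inner ℝ (f2 j j) g)))
      = (∑ j, ((4 * t) * (inner ℝ f (I * g)
              + x j * (inner ℝ f (I * g1 j) + inner ℝ (f1 j) (I * g)))
          + (-4 * t) * ((U * inner ℝ f f)
              + x j * (U * (inner ℝ f (f1 j) + inner ℝ (f1 j) f)))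
          + (8 * t ^ 2) * (inner ℝ (f1 j) (g1 j))))
        - 4 * t * ((∑ i, x i * U1 i) * inner ℝ f f) + 8 * t ^ 2 * inner ℝ L g := by
    rw [hL, sum_inner, Finset.sum_mul, Finset.mul_sum, Finset.mul_sum, ← Finset.sum_sub_distrib,
      ← Finset.sum_add_distrib]
    refine Finset.sum_congr rfl fun j _ => ?_
    simp only [if_true]
    ring
  rw [hpair, hsingle]
  have hgr : g.re = -L.im + U * f.im := by
    have := congrArg Complex.im hg
    simpa using this
  have hgi : g.im = L.re - U * f.re := by
    have := congrArg Complex.re hg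
    simp at this
    linarith
  have hmain : (∑ i, 2 * inner ℝ (x i • f + (2 * t) • (I * f1 i))
        (x i • g + ((2 * t) • (I * g1 i) + (2 : ℝ) • (I * f1 i))))
      = (∑ i, (-4 * (x i * inner ℝ (I * f) (f1 i)) - 2 * x i ^ 2 * inner ℝ (I * f) L
          + 8 * t * inner ℝ (f1 i) (f1 i) + 8 * t * x i * inner ℝ (f1 i) L
          + 4 * t * inner ℝ f L))
        + (∑ j, ((4 * t) * (inner ℝ f (I * g)
              + x j * (inner ℝ f (I * g1 j) + inner ℝ (f1 j) (I * g)))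
          + (-4 * t) * ((U * inner ℝ f f)
              + x j * (U * (inner ℝ f (f1 j) + inner ℝ (f1 j) f)))
          + (8 * t ^ 2) * (inner ℝ (f1 j) (g1 j)))) := by
    rw [← Finset.sum_add_distrib]
    refine Finset.sum_congr rfl fun j _ => ?_
    simp only [Complex.inner, Complex.mul_re, Complex.mul_im, Complex.conj_re, Complex.conj_im,
      Complex.add_re, Complex.add_im, Complex.real_smul, Complex.ofReal_re, Complex.ofReal_im,
      Complex.I_re, Complex.I_im, hgr, hgi]
    ring
  rw [hmain]
  have hlast : U * inner ℝ f g = inner ℝ L g := by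
    simp only [Complex.inner, Complex.mul_re, Complex.conj_re, Complex.conj_im, hgr, hgi]
    ring
  linear_combination (8 * t ^ 2) * hlast

/-- integrable with zero integral -/
def ZInt (h : (E n) → ℝ) : Prop := Integrable h ∧ ∫ x, h x = 0

theorem FN.zint {j : Fin n} {h h' : ℝ → (E n) → ℝ} (hh : FN j h h') (t : ℝ) : ZInt (h' t) :=
  ⟨hh.2.1.integrable t, hh.integral_eq t⟩

theorem ZInt.add {f g : (E n) → ℝ} (hf : ZInt f) (hg : ZInt g) : ZInt (fun x => f x + g x) :=
  ⟨hf.1.add hg.1, by rw [integral_add hf.1 hg.1, hf.2, hg.2, add_zero]⟩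

theorem ZInt.cmul {f : (E n) → ℝ} (hf : ZInt f) (c : ℝ) : ZInt (fun x => c * f x) :=
  ⟨hf.1.const_mul c, by rw [integral_const_mul, hf.2, mul_zero]⟩

theorem ZInt.sum {f : Fin n → (E n) → ℝ} (hf : ∀ i, ZInt (f i)) : ZInt (fun x => ∑ i, f i x) :=
  ⟨integrable_finsetSum _ fun i _ => (hf i).1, by
    rw [integral_finsetSum _ fun i _ => (hf i).1]
    exact Finset.sum_eq_zero fun i _ => (hf i).2⟩

theorem ZInt.final {R1 R2 Z1 Z2 D : (E n) → ℝ} (c1 c2 : ℝ) (h1 : Integrable R1)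
    (h2 : Integrable R2) (hZ1 : ZInt Z1) (hZ2 : ZInt Z2)
    (h : ∀ x, D x = c1 * R1 x + c2 * R2 x + Z1 x + Z2 x) :
    c1 * (∫ x, R1 x) + c2 * (∫ x, R2 x) = ∫ x, D x := by
  have i1 : Integrable (fun x => c1 * R1 x) := h1.const_mul c1
  have i2 : Integrable (fun x => c2 * R2 x) := h2.const_mul c2
  have i3 : Integrable (fun x => c1 * R1 x + c2 * R2 x) := i1.add i2
  have i4 : Integrable (fun x => c1 * R1 x + c2 * R2 x + Z1 x) := i3.add hZ1.1
  simp only [h]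
  rw [integral_add i4 hZ2.1, integral_add i3 hZ1.1, integral_add i1 i2, integral_const_mul,
    integral_const_mul, hZ1.2, hZ2.2, add_zero, add_zero]

end Helpers

/-- The (unscaled) pseudoconformal identity for `H(t) = −Δ + V(x) + W(x,t)`:
the function `t ↦ ‖(x−2pt)ψ(t)‖² + 4t²∫(V+W)|ψ|²` is differentiable with
derivative `4t∫(x·∇V + x·∇ₓW + 2V + 2W)|ψ|² + 4t²∫∂ₜW|ψ|²`. -/
theorem pseudoconformal_identity_unscaled {n : ℕ} (hn : 1 ≤ n)
    (V : EuclideanSpace ℝ (Fin n) → ℝ) (hV : ContDiff ℝ (⊤ : ℕ∞) V)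
    (hVbd : ∀ m : ℕ, ∃ C : ℝ, ∀ x, ‖iteratedFDeriv ℝ m V x‖ ≤ C)
    (W : ℝ → EuclideanSpace ℝ (Fin n) → ℝ)
    (hW : ContDiff ℝ (⊤ : ℕ∞) (fun p : ℝ × EuclideanSpace ℝ (Fin n) => W p.1 p.2))
    (hWbd : ∀ m : ℕ, ∃ C : ℝ, ∀ p : ℝ × EuclideanSpace ℝ (Fin n),
      ‖iteratedFDeriv ℝ m (fun q : ℝ × EuclideanSpace ℝ (Fin n) => W q.1 q.2) p‖ ≤ C)
    (ψ : ℝ → EuclideanSpace ℝ (Fin n) → ℂ)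
    (hψ : ContDiff ℝ (⊤ : ℕ∞) (fun p : ℝ × EuclideanSpace ℝ (Fin n) => ψ p.1 p.2))
    (hS : LocUnifSchwartz ψ)
    (hS' : LocUnifSchwartz (fun t => tderiv ψ t))
    (heq : ∀ t x, Complex.I * tderiv ψ t x
      = -lap (ψ t) x + (V x : ℂ) * ψ t x + (W t x : ℂ) * ψ t x) :
    ∀ t : ℝ,
      HasDerivAt (fun s => conformalFactor ψ s
          + 4 * s ^ 2 * ∫ x : EuclideanSpace ℝ (Fin n), (V x + W s x) * ‖ψ s x‖ ^ 2)
        (4 * t * (∫ x : EuclideanSpace ℝ (Fin n),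
            (xdotGrad V x + xdotGrad (W t) x + 2 * V x + 2 * W t x) * ‖ψ t x‖ ^ 2)
          + 4 * t ^ 2 * ∫ x : EuclideanSpace ℝ (Fin n),
              deriv (fun s => W s x) t * ‖ψ t x‖ ^ 2) t := by
  have hslice : ∀ t, ContDiff ℝ (⊤ : ℕ∞) (ψ t) := fun t => hψ.comp (contDiff_prodMk_right t)
  have hWslice : ∀ t, ContDiff ℝ (⊤ : ℕ∞) (W t) := fun t => hW.comp (contDiff_prodMk_right t)
  have hg0 : ∀ t, ContDiff ℝ (⊤ : ℕ∞) (tderiv ψ t) := tderiv_contDiff hψ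
  have hWd : Differentiable ℝ (fun p : ℝ × EuclideanSpace ℝ (Fin n) => W p.1 p.2) :=
    hW.differentiable (by simp)
  -- niceness of the building blocks
  have nf : Nice ψ := hS.nice 0 (fun t => (hslice t).continuous) (fun t x => by simp)
  have np : ∀ i, Nice (fun t x => pd (ψ t) i x) := fun i =>
    hS.nice 1 (fun t => (pd_contDiff (hslice t) i).continuous) (fun t x => norm_pd_le _ _ _)
  have npp : ∀ i j, Nice (fun t x => pd (fun y => pd (ψ t) i y) j x) := fun i j =>
    hS.nice 2 (fun t => (pd_contDiff (pd_contDiff (hslice t) i) j).continuous)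
      (fun t x => norm_pd_pd_le (hslice t) _ _ _)
  have ng : Nice (tderiv ψ) := hS'.nice 0 (fun t => (hg0 t).continuous) (fun t x => by simp)
  have ngp : ∀ i, Nice (fun t x => pd (tderiv ψ t) i x) := fun i =>
    hS'.nice 1 (fun t => (pd_contDiff (hg0 t) i).continuous) (fun t x => norm_pd_le _ _ _)
  have hf : ∀ j, FN j ψ (fun t x => pd (ψ t) j x) := fun j =>
    ⟨nf, np j, fun t x => pd_line (hslice t) j x⟩
  have hp : ∀ i j, FN j (fun t x => pd (ψ t) i x)
      (fun t x => pd (fun y => pd (ψ t) i y) j x) := fun i j =>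
    ⟨np i, npp i j, fun t x => pd_line (pd_contDiff (hslice t) i) j x⟩
  have hg : ∀ j, FN j (tderiv ψ) (fun t x => pd (tderiv ψ t) j x) := fun j =>
    ⟨ng, ngp j, fun t x => pd_line (hg0 t) j x⟩
  -- the potential
  obtain ⟨CV0, hCV0⟩ := hVbd 0
  obtain ⟨CV1, hCV1⟩ := hVbd 1
  obtain ⟨CW0, hCW0⟩ := hWbd 0
  obtain ⟨CW1, hCW1⟩ := hWbd 1
  simp only [norm_iteratedFDeriv_zero] at hCV0 hCW0
  simp only [norm_iteratedFDeriv_one] at hCV1 hCW1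
  have hWx : ∀ t x v, fderiv ℝ (W t) x v =
      fderiv ℝ (fun q : ℝ × EuclideanSpace ℝ (Fin n) => W q.1 q.2) (t, x) (0, v) := by
    intro t x v
    rw [show fderiv ℝ (W t) x = _ from (slice_hasFDerivAt hWd t x).fderiv]
    simp
  have hWt : ∀ t x, deriv (fun s => W s x) t =
      fderiv ℝ (fun q : ℝ × EuclideanSpace ℝ (Fin n) => W q.1 q.2) (t, x) (1, 0) :=
    fun t x => (slice_hasDerivAt hWd t x).deriv
  have mUt : Mult (fun t (x : EuclideanSpace ℝ (Fin n)) => deriv (fun s => W s x) t) := by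
    refine Mult.bdd (C := CW1) (fun t => ?_) (fun t x => ?_)
    · simp only [hWt]
      exact ((hW.continuous_fderiv (by simp)).comp (Continuous.prodMk_right t)).clm_apply
        continuous_const
    · rw [hWt]
      refine ((ContinuousLinearMap.le_opNorm _ _).trans ?_).trans (hCW1 (t, x))
      simp [Prod.norm_def]
  have hU : ∀ j, FM j (fun t x => V x + W t x) (fun t x =>
      fderiv ℝ V x (EuclideanSpace.single j 1) + fderiv ℝ (W t) x (EuclideanSpace.single j 1)) := by
    intro j
    refine ⟨Mult.bdd (C := CV0 + CW0) (fun t => ?_) (fun t x => ?_),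
      Mult.bdd (C := CV1 + CW1) (fun t => ?_) (fun t x => ?_), fun t x => ?_⟩
    · exact hV.continuous.add (hWslice t).continuous
    · exact (norm_add_le _ _).trans (add_le_add (hCV0 x) (hCW0 (t, x)))
    · exact ((hV.continuous_fderiv (by simp)).clm_apply continuous_const).add
        (((hWslice t).continuous_fderiv (by simp)).clm_apply continuous_const)
    · refine (norm_add_le _ _).trans (add_le_add ?_ ?_)
      · exact (norm_fderiv_single_le _ j).trans (hCV1 x)
      · rw [hWx]
        refine ((ContinuousLinearMap.le_opNorm _ _).trans ?_).trans (hCW1 (t, x))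
        simp [Prod.norm_def]
    · exact HasDerivAt.add
        ((hV.differentiable (by simp) x).hasFDerivAt.hasLineDerivAt _)
        (((hWslice t).differentiable (by simp) x).hasFDerivAt.hasLineDerivAt _)
  have mU : Mult (fun t x => V x + W t x) := (hU ⟨0, hn⟩).1
  have nff := nf.inner nf
  have m2t : Mult (fun t (_ : EuclideanSpace ℝ (Fin n)) => 2 * t) := Mult.time (by fun_prop)
  have m8t : Mult (fun t (_ : EuclideanSpace ℝ (Fin n)) => 8 * t) := Mult.time (by fun_prop)
  have m4t : Mult (fun t (_ : EuclideanSpace ℝ (Fin n)) => 4 * t ^ 2) := Mult.time (by fun_prop)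
  have m2 : Mult (fun t (_ : EuclideanSpace ℝ (Fin n)) => (2 : ℝ)) := Mult.time (by fun_prop)
  have na : ∀ i, Nice (fun t x => x i • ψ t x + (2 * t) • (I * pd (ψ t) i x)) := fun i =>
    ((Mult.coord i).smul nf).add (m2t.smul (np i).Imul)
  have na' : ∀ i, Nice (fun t x => x i • tderiv ψ t x + ((2 * t) • (I * pd (tderiv ψ t) i x)
      + (2 : ℝ) • (I * pd (ψ t) i x))) := fun i =>
    ((Mult.coord i).smul ng).add ((m2t.smul (ngp i).Imul).add (m2.smul (np i).Imul))
  -- the total integrand and its time derivative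
  have nF1 := Nice.sum Finset.univ (fun i => (na i).inner (na i))
  have nF2 := mU.mulN nff
  have nF := nF1.add (m4t.mulN nF2)
  have nD := (Nice.sum Finset.univ (fun i => m2.mulN ((na i).inner (na' i)))).add
    ((m8t.mulN nF2).add (m4t.mulN ((mUt.mulN nff).add (mU.mulN (m2.mulN (nf.inner ng))))))
  have hder : ∀ t x, HasDerivAt _ _ t := fun t (x : EuclideanSpace ℝ (Fin n)) =>
    show HasDerivAt (fun s => (∑ i, inner ℝ (x i • ψ s x + (2 * s) • (I * pd (ψ s) i x))
        (x i • ψ s x + (2 * s) • (I * pd (ψ s) i x)))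
        + (4 * s ^ 2) * ((V x + W s x) * inner ℝ (ψ s x) (ψ s x)))
      ((∑ i, 2 * inner ℝ (x i • ψ t x + (2 * t) • (I * pd (ψ t) i x))
        (x i • tderiv ψ t x + ((2 * t) • (I * pd (tderiv ψ t) i x)
          + (2 : ℝ) • (I * pd (ψ t) i x))))
        + ((8 * t) * ((V x + W t x) * inner ℝ (ψ t x) (ψ t x))
          + (4 * t ^ 2) * (deriv (fun s => W s x) t * inner ℝ (ψ t x) (ψ t x)
          + (V x + W t x) * (2 * inner ℝ (ψ t x) (tderiv ψ t x))))) t from by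
    have hψt := tderiv_has hψ t x
    have hWt' : HasDerivAt (fun s => W s x) (deriv (fun s => W s x) t) t :=
      (slice_hasDerivAt hWd t x).differentiableAt.hasDerivAt
    have hid : HasDerivAt (fun s : ℝ => 2 * s) 2 t := by
      simpa using (hasDerivAt_id t).const_mul (2 : ℝ)
    have hsq : HasDerivAt (fun s : ℝ => 4 * s ^ 2) (8 * t) t := by
      refine ((hasDerivAt_pow 2 t).const_mul (4 : ℝ)).congr_deriv ?_
      norm_num
      ring
    have hai : ∀ i, HasDerivAt (fun s => x i • ψ s x + (2 * s) • (I * pd (ψ s) i x))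
        (x i • tderiv ψ t x + ((2 * t) • (I * pd (tderiv ψ t) i x)
          + (2 : ℝ) • (I * pd (ψ t) i x))) t := fun i =>
      (hψt.const_smul (x i)).add (hid.smul ((pd_time hψ i t x).const_mul I))
    refine HasDerivAt.add (HasDerivAt.fun_sum fun i _ => ?_) ?_
    · refine ((hai i).inner ℝ (hai i)).congr_deriv ?_
      rw [real_inner_comm (x i • ψ t x + (2 * t) • (I * pd (ψ t) i x)) (x i • tderiv ψ t x + _)]
      ring
    · refine (hsq.fun_mul ((hWt'.const_add (V x)).fun_mul (hψt.inner ℝ hψt))).congr_deriv ?_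
      rw [real_inner_comm (ψ t x) (tderiv ψ t x)]
      ring
  intro t
  have main := nF.hasDerivAt nD hder t
  have hFeq : (fun s => conformalFactor ψ s
      + 4 * s ^ 2 * ∫ x : EuclideanSpace ℝ (Fin n), (V x + W s x) * ‖ψ s x‖ ^ 2)
      = fun s => ∫ x : EuclideanSpace ℝ (Fin n),
        ((∑ i, inner ℝ (x i • ψ s x + (2 * s) • (I * pd (ψ s) i x))
        (x i • ψ s x + (2 * s) • (I * pd (ψ s) i x)))
        + (4 * s ^ 2) * ((V x + W s x) * inner ℝ (ψ s x) (ψ s x))) := by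
    funext s
    rw [integral_add (nF1.integrable s) ((m4t.mulN nF2).integrable s), integral_const_mul]
    unfold conformalFactor
    simp only [real_inner_self_eq_norm_sq]
    congr 1
    refine integral_congr_ae (Filter.Eventually.of_forall fun x => ?_)
    refine Finset.sum_congr rfl fun i _ => ?_
    simp only [Complex.real_smul]
    congr 2
    push_cast
    ring
  rw [hFeq]
  convert main using 1
  -- the divergence identity
  have hZ1 := ZInt.sum fun i => ZInt.sum fun j =>
    (((((FM.coord i j).mul ((FM.coord i j).mul ((hf j).Imul.inner (hp j j)))).zint t).cmul
        (-2)).add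
      ((((FM.coord i j).mul ((hp i j).inner (hp j j))).zint t).cmul (8 * t))).add
      ((((FM.coord j j).mul ((hp i j).inner (hp i j))).zint t).cmul (-4 * t))
      |>.add ((((hf j).inner (hp j j)).zint t).cmul (4 * t))
  have hZ2 := ZInt.sum fun j =>
    (((((FM.coord j j).mul ((hf j).inner (hg j).Imul)).zint t).cmul (4 * t)).add
      ((((FM.coord j j).mul ((hU j).mul ((hf j).inner (hf j)))).zint t).cmul (-4 * t))).add
      ((((hp j j).inner (hg j)).zint t).cmul (8 * t ^ 2))
  have nR1 : Nice (fun t x => ((∑ i, x i * (fderiv ℝ V x (EuclideanSpace.single i 1)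
      + fderiv ℝ (W t) x (EuclideanSpace.single i 1))) + 2 * (V x + W t x))
        * inner ℝ (ψ t x) (ψ t x)) := by
    have h := (Nice.sum Finset.univ (fun i => (Mult.coord i).mulN ((hU i).2.1.mulN nff))).add
      (m2.mulN nF2)
    convert h using 3
    rw [add_mul, Finset.sum_mul]
    congr 1
    · exact Finset.sum_congr rfl fun i _ => by ring
    · ring
  have hR1 : (∫ x : EuclideanSpace ℝ (Fin n),
      (xdotGrad V x + xdotGrad (W t) x + 2 * V x + 2 * W t x) * ‖ψ t x‖ ^ 2)
      = ∫ x : EuclideanSpace ℝ (Fin n), ((∑ i, x i * (fderiv ℝ V x (EuclideanSpace.single i 1)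
      + fderiv ℝ (W t) x (EuclideanSpace.single i 1))) + 2 * (V x + W t x))
        * inner ℝ (ψ t x) (ψ t x) := by
    refine integral_congr_ae (Filter.Eventually.of_forall fun x => ?_)
    simp only [real_inner_self_eq_norm_sq, xdotGrad, mul_add, Finset.sum_add_distrib]
    ring
  have hR2 : (∫ x : EuclideanSpace ℝ (Fin n), deriv (fun s => W s x) t * ‖ψ t x‖ ^ 2)
      = ∫ x : EuclideanSpace ℝ (Fin n),
        deriv (fun s => W s x) t * inner ℝ (ψ t x) (ψ t x) := by
    simp only [real_inner_self_eq_norm_sq]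
  rw [hR1, hR2]
  refine ZInt.final _ _ (nR1.integrable t) ((mUt.mulN nff).integrable t) hZ1 hZ2 fun x => ?_
  have := key_algebra (ψ t x) (tderiv ψ t x) (fun i => pd (ψ t) i x)
    (fun i => pd (tderiv ψ t) i x) (fun i j => pd (fun y => pd (ψ t) i y) j x)
    (fun i j => pd_symm (hslice t) i j x) (fun i => x i)
    (fun i => fderiv ℝ V x (EuclideanSpace.single i 1)
      + fderiv ℝ (W t) x (EuclideanSpace.single i 1))
    (V x + W t x) (deriv (fun s => W s x) t) t
    (by rw [heq t x]; simp only [lap]; push_cast; ring)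
  exact this

end
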